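/- arXiv:1805.01303 — 2 statements merged into one kernel-verified Lean document; each statement's English description precedes it below -/
import Mathlib

section
/- Let m > 0 and let p ∈ ℝ⁴ be a covector with p_α p^α = −4m² and p₄ > 0. Let u ∈ ℂ⁴ satisfy u_α u^α = 0, u_α ū^α > 0 and p_α u^α = 0, and let v ∈ ℝ⁴ satisfy p_α v^α = 0 and u_α v^α = 0. Set c = 4m² ( ½ u_α ū^α + v_β v^β ). For θ ∈ ℝ define the real 4×4 matrix D by D^α{}_β = δ^α{}_β + Re( i u^α p_β e^{iθ} ) + v^α p_β. Then det D = 1, and the strain matrix S^α{}_β = η^{αγ}(D^μ{}_γ η_{μν} D^ν{}_β) − δ^α{}_β has characteristic polynomial X²(X² + cX + c) = X⁴ + cX³ + cX²; equivalently tr S = −c, ½((tr S)² − tr(S²)) = c, tr(adj S) = 0 and det S = 0. -/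
/-!
Write `w = Re(i e^{iθ} u) + v`. Then `D = 1 + w pᵀ` with `p · w = 0`, so `det D = 1 + p · w = 1`.
Put `q = w_α w^α` and `k = p_α p^α`. Expanding, `S = p♯ w♭ + w p + q p♯ p`, which factors through
dimension two as the product of the columns `p♯, w` and the rows `w♭ + q p, p`. The product in the
opposite order is `!![q k, q; k, 0]`, of trace `q k` and determinant `-q k`, and it determines the
characteristic polynomial of `S`. Finally `q = ½ u_α ū^α + v_α v^α` whatever `θ` is, because `u` is
null and orthogonal to `v`.
-/

open Matrix Complex Polynomial

section InnerDimension

variable {m n R : Type*} [Fintype m] [Fintype n] [CommRing R]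

theorem det_one_add_vecMulVec [DecidableEq n] (w p : n → R) :
    (1 + vecMulVec w p).det = 1 + p ⬝ᵥ w := by
  rw [vecMulVec_eq Unit, det_one_add_replicateCol_mul_replicateRow]

theorem det_mul_eq_zero_of_card_lt [DecidableEq n] (A : Matrix n m R) (B : Matrix m n R)
    (h : Fintype.card m < Fintype.card n) : (A * B).det = 0 := by
  classical
  rw [det_eq_sign_charpoly_coeff, charpoly_mul_comm_of_le A B h.le, mul_coeff_zero, coeff_X_pow,
    if_neg (Nat.sub_pos_of_lt h).ne, zero_mul, mul_zero]

theorem adjugate_mul_eq_zero_of_card_add_one_lt [DecidableEq n] (A : Matrix n m R)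
    (B : Matrix m n R) (h : Fintype.card m + 1 < Fintype.card n) : (A * B).adjugate = 0 := by
  ext i j
  -- An entry of the adjugate is the determinant of `A * B` with a row replaced by a basis vector;
  -- this matrix factors through `m ⊕ Unit`.
  have factorization : (A * B).updateRow j (Pi.single i 1) =
      fromCols (A.updateRow j 0) (replicateCol Unit (Pi.single j 1)) *
        fromRows B (replicateRow Unit (Pi.single i 1)) := by
    ext a b
    by_cases ha : a = j
    · subst ha
      simp [mul_apply]
    · simp [mul_apply, ha]
  rw [adjugate_apply, factorization, Matrix.zero_apply]
  exact det_mul_eq_zero_of_card_lt _ _ (by simpa using h)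

theorem charpoly_mul_of_inner_two [DecidableEq n] (A : Matrix n (Fin 2) R)
    (B : Matrix (Fin 2) n R) (h : 2 ≤ Fintype.card n) :
    (A * B).charpoly = X ^ Fintype.card n - C (B * A).trace * X ^ (Fintype.card n - 1)
      + C (B * A).det * X ^ (Fintype.card n - 2) := by
  nontriviality R
  obtain ⟨d, hd⟩ := Nat.exists_eq_add_of_le' h
  rw [charpoly_mul_comm_of_le A B (by simpa using h), charpoly_fin_two, Fintype.card_fin, hd]
  simp only [Nat.add_sub_cancel, Nat.reduceSubDiff]
  ring

theorem trace_sq_sub_trace_mul_self_of_inner_two (A : Matrix n (Fin 2) R)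
    (B : Matrix (Fin 2) n R) :
    (A * B).trace ^ 2 - ((A * B) * (A * B)).trace = 2 * (B * A).det := by
  have trace_mul_self : ((A * B) * (A * B)).trace = ((B * A) * (B * A)).trace := by
    rw [Matrix.mul_assoc, trace_mul_comm, Matrix.mul_assoc, Matrix.mul_assoc, Matrix.mul_assoc]
  rw [trace_mul_self, trace_mul_comm A B, trace_fin_two, trace_fin_two, det_fin_two]
  simp only [mul_apply (M := B * A), Fin.sum_univ_two]
  ring

end InnerDimension

section Strain

variable {n R : Type*} [Fintype n] [DecidableEq n] [CommRing R]

/-- The mixed strain tensor `S^α{}_β = G^{αγ} (D^μ{}_γ G_{μν} D^ν{}_β) - δ^α{}_β` of a deformation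
gradient `D`. The inverse metric `G^{αγ}` is the separate argument `H`. -/
def strain (G H D : Matrix n n R) : Matrix n n R :=
  H * Dᵀ * G * D - 1

variable {G H : Matrix n n R}

theorem strain_one_add_vecMulVec (hHG : H * G = 1) (w p : n → R) :
    strain G H (1 + vecMulVec w p) =
      vecMulVec (H *ᵥ p) (w ᵥ* G + (w ⬝ᵥ G *ᵥ w) • p) + vecMulVec w p := by
  have pullback : H * (1 + vecMulVec w p)ᵀ * G = 1 + vecMulVec (H *ᵥ p) (w ᵥ* G) := by
    rw [transpose_add, transpose_one, transpose_vecMulVec, Matrix.mul_add, Matrix.mul_one,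
      Matrix.add_mul, hHG, mul_vecMulVec, vecMulVec_mul]
  rw [strain, pullback, Matrix.add_mul, Matrix.one_mul, Matrix.mul_add, Matrix.mul_one,
    vecMulVec_mul_vecMulVec, ← dotProduct_mulVec, vecMulVec_add]
  abel

theorem exists_strain_eq_mul_of_inner_two (hHG : H * G = 1) {w p : n → R} (hpw : p ⬝ᵥ w = 0) :
    ∃ (A : Matrix n (Fin 2) R) (B : Matrix (Fin 2) n R),
      strain G H (1 + vecMulVec w p) = A * B ∧
      B * A = !![(w ⬝ᵥ G *ᵥ w) * (p ⬝ᵥ H *ᵥ p), w ⬝ᵥ G *ᵥ w; p ⬝ᵥ H *ᵥ p, 0] := by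
  have lower_raise : (w ᵥ* G) ⬝ᵥ H *ᵥ p = 0 := by
    rw [← dotProduct_mulVec, mulVec_mulVec, mul_eq_one_comm.mp hHG, one_mulVec, dotProduct_comm,
      hpw]
  refine ⟨(of ![H *ᵥ p, w])ᵀ, of ![w ᵥ* G + (w ⬝ᵥ G *ᵥ w) • p, p], ?_, ?_⟩
  · rw [strain_one_add_vecMulVec hHG]
    ext i j
    simp [mul_apply, vecMulVec_apply]
  · have entry (x : Fin 2 → n → R) (y : Fin 2 → n → R) :
        of x * (of y)ᵀ = of fun i j => x i ⬝ᵥ y j := rfl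
    rw [entry]
    ext i j
    fin_cases i <;> fin_cases j <;>
      simp [add_dotProduct, smul_dotProduct, lower_raise, hpw, ← dotProduct_mulVec]

end Strain

section RealPart

variable {n : Type*} [Fintype n]

theorem re_ofReal_dotProduct (x : n → ℝ) (y : n → ℂ) :
    (ofReal ∘ x ⬝ᵥ y).re = x ⬝ᵥ re ∘ y := by
  simp [dotProduct]

theorem re_dotProduct_map_ofReal_mulVec (G : Matrix n n ℝ) (x y : n → ℂ) :
    (x ⬝ᵥ G.map ofReal *ᵥ y).re = re ∘ x ⬝ᵥ G *ᵥ (re ∘ y) - im ∘ x ⬝ᵥ G *ᵥ (im ∘ y) := by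
  simp [dotProduct, mulVec, Finset.sum_sub_distrib]

variable {G : Matrix n n ℝ} {u : n → ℂ}

theorem re_dotProduct_mulVec_re_of_null (hu : u ⬝ᵥ G.map ofReal *ᵥ u = 0) :
    re ∘ u ⬝ᵥ G *ᵥ (re ∘ u) = 1 / 2 * (star u ⬝ᵥ G.map ofReal *ᵥ u).re := by
  have null_re := congrArg re hu
  have star_re := re_dotProduct_map_ofReal_mulVec G (star u) u
  rw [re_dotProduct_map_ofReal_mulVec, zero_re] at null_re
  have re_star : re ∘ star u = re ∘ u := rfl
  have im_star : im ∘ star u = -(im ∘ u) := rfl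
  rw [re_star, im_star, neg_dotProduct] at star_re
  linear_combination null_re / 2 - star_re / 2

theorem dotProduct_mulVec_re_smul_add (hG : G.IsSymm) {v : n → ℝ} {ζ : ℂ} (hζ : ‖ζ‖ = 1)
    (hu : u ⬝ᵥ G.map ofReal *ᵥ u = 0) (huv : u ⬝ᵥ G.map ofReal *ᵥ (ofReal ∘ v) = 0) :
    (re ∘ (ζ • u) + v) ⬝ᵥ G *ᵥ (re ∘ (ζ • u) + v) =
      1 / 2 * (star u ⬝ᵥ G.map ofReal *ᵥ u).re + v ⬝ᵥ G *ᵥ v := by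
  have null_smul : ζ • u ⬝ᵥ G.map ofReal *ᵥ (ζ • u) = 0 := by
    rw [mulVec_smul, smul_dotProduct, dotProduct_smul, hu, smul_zero, smul_zero]
  have hermitian_smul : star (ζ • u) ⬝ᵥ G.map ofReal *ᵥ (ζ • u) =
      star u ⬝ᵥ G.map ofReal *ᵥ u := by
    have star_mul_self : star ζ * ζ = 1 := by
      rw [star_def, conj_mul', hζ, ofReal_one, one_pow]
    rw [star_smul, mulVec_smul, smul_dotProduct, dotProduct_smul, smul_smul, star_mul_self,
      one_smul]
  have cross : re ∘ (ζ • u) ⬝ᵥ G *ᵥ v = 0 := by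
    have h : (ζ • u ⬝ᵥ G.map ofReal *ᵥ (ofReal ∘ v)).re = 0 := by
      rw [smul_dotProduct, huv, smul_zero, zero_re]
    have re_v : re ∘ ofReal ∘ v = v := rfl
    have im_v : im ∘ ofReal ∘ v = 0 := rfl
    rwa [re_dotProduct_map_ofReal_mulVec, re_v, im_v, mulVec_zero, dotProduct_zero, sub_zero] at h
  have cross_symm : v ⬝ᵥ G *ᵥ (re ∘ (ζ • u)) = 0 := by
    rw [← dotProduct_transpose_mulVec, hG.eq, cross]
  rw [mulVec_add, add_dotProduct, dotProduct_add, dotProduct_add, cross, cross_symm,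
    re_dotProduct_mulVec_re_of_null null_smul, hermitian_smul]
  ring

end RealPart

section Minkowski

/-- The Minkowski metric of signature `(+, +, +, -)`, the time coordinate being the last one. -/
def minkowskiMetric (R : Type*) [CommRing R] : Matrix (Fin 4) (Fin 4) R :=
  diagonal ![1, 1, 1, -1]

theorem isSymm_minkowskiMetric (R : Type*) [CommRing R] : (minkowskiMetric R).IsSymm :=
  isSymm_diagonal _

theorem minkowskiMetric_mul_self (R : Type*) [CommRing R] :
    minkowskiMetric R * minkowskiMetric R = 1 := by
  rw [minkowskiMetric, diagonal_mul_diagonal, ← diagonal_one]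
  congr 1
  ext i
  fin_cases i <;> simp

theorem dotProduct_minkowskiMetric_mulVec {R : Type*} [CommRing R] (x y : Fin 4 → R) :
    x ⬝ᵥ minkowskiMetric R *ᵥ y = x 0 * y 0 + x 1 * y 1 + x 2 * y 2 - x 3 * y 3 := by
  simp [minkowskiMetric, dotProduct, mulVec_diagonal, Fin.sum_univ_four, sub_eq_add_neg]

theorem map_ofReal_minkowskiMetric : (minkowskiMetric ℝ).map ofReal = minkowskiMetric ℂ := by
  rw [minkowskiMetric, diagonal_map ofReal_zero, minkowskiMetric]
  congr 1
  ext i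
  fin_cases i <;> simp

theorem re_star_dotProduct_minkowskiMetric_mulVec (u : Fin 4 → ℂ) :
    (star u ⬝ᵥ minkowskiMetric ℂ *ᵥ u).re =
      normSq (u 0) + normSq (u 1) + normSq (u 2) - normSq (u 3) := by
  simp [dotProduct_minkowskiMetric_mulVec, normSq_apply]

end Minkowski

theorem massive_solution_volume_preserving_and_strain_charpoly_general
    {n : Type*} [Fintype n] [DecidableEq n] (hn : 4 ≤ Fintype.card n)
    {G H : Matrix n n ℝ} (hG : G.IsSymm) (hHG : H * G = 1)
    {p : n → ℝ} {u : n → ℂ} {v : n → ℝ}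
    (hu_null : u ⬝ᵥ G.map ofReal *ᵥ u = 0)
    (hpu : ofReal ∘ p ⬝ᵥ u = 0)
    (hpv : p ⬝ᵥ v = 0)
    (huv : u ⬝ᵥ G.map ofReal *ᵥ (ofReal ∘ v) = 0)
    {c : ℝ} (hc : c = -((p ⬝ᵥ H *ᵥ p) *
      (1 / 2 * (star u ⬝ᵥ G.map ofReal *ᵥ u).re + v ⬝ᵥ G *ᵥ v)))
    {θ : ℝ} {D : Matrix n n ℝ}
    (hD : ∀ α β, D α β = (if α = β then 1 else 0)
      + (I * u α * (p β : ℂ) * exp (θ * I)).re + v α * p β)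
    {S : Matrix n n ℝ} (hS : S = strain G H D) :
    D.det = 1 ∧
    S.charpoly = X ^ Fintype.card n + C c * X ^ (Fintype.card n - 1)
      + C c * X ^ (Fintype.card n - 2) ∧
    S.trace = -c ∧
    (1 / 2 : ℝ) * (S.trace ^ 2 - (S * S).trace) = c ∧
    S.adjugate = 0 ∧
    S.det = 0 := by
  set ζ := I * exp (θ * I)
  have norm_ζ : ‖ζ‖ = 1 := by rw [norm_mul, norm_I, norm_exp_ofReal_mul_I, one_mul]
  set w := re ∘ (ζ • u) + v with hw
  have D_eq : D = 1 + vecMulVec w p := by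
    ext α β
    have phase : I * u α * p β * exp (θ * I) = ζ * u α * p β := by ring
    simp only [hD, phase, re_mul_ofReal, hw, Matrix.add_apply, one_apply, vecMulVec_apply,
      Pi.add_apply, Function.comp_apply, Pi.smul_apply, smul_eq_mul]
    ring
  have hpw : p ⬝ᵥ w = 0 := by
    rw [hw, dotProduct_add, hpv, ← re_ofReal_dotProduct, dotProduct_smul, hpu, smul_zero, zero_re,
      add_zero]
  rw [← dotProduct_mulVec_re_smul_add hG norm_ζ hu_null huv, ← hw] at hc
  obtain ⟨A, B, strain_eq, hBA⟩ := exists_strain_eq_mul_of_inner_two hHG hpw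
  have trace_BA : (B * A).trace = -c := by
    rw [hBA, trace_fin_two_of, hc]
    ring
  have det_BA : (B * A).det = c := by
    rw [hBA, det_fin_two_of, hc]
    ring
  rw [hS, D_eq, strain_eq]
  refine ⟨?_, ?_, ?_, ?_, ?_, ?_⟩
  · rw [det_one_add_vecMulVec, hpw, add_zero]
  · rw [charpoly_mul_of_inner_two A B (by lia), trace_BA, det_BA, C_neg, neg_mul, sub_neg_eq_add]
  · rw [trace_mul_comm, trace_BA]
  · rw [trace_sq_sub_trace_mul_self_of_inner_two, det_BA]
    ring
  · exact adjugate_mul_eq_zero_of_card_add_one_lt A B (by rw [Fintype.card_fin]; lia)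
  · exact det_mul_eq_zero_of_card_lt A B (by rw [Fintype.card_fin]; lia)

/-- Let `m > 0` and let `p` be a timelike covector with `p_α p^α = −4m²`,
`p₄ > 0`.  Let `u ∈ ℂ⁴` be isotropic orthogonal to `p`, and `v ∈ ℝ⁴` orthogonal to `p`
and `u`.  Set `c = 4m²(½ u_α ū^α + v_β v^β)`.  The deformation gradient
`D^α{}_β = δ^α{}_β + Re(i u^α p_β e^{iθ}) + v^α p_β` of the massive solution satisfies
`det D = 1`, and the strain matrix `S = η⁻¹ Dᵀ η D − 1` has characteristic polynomial
`X⁴ + cX³ + cX²`; equivalently `tr S = −c`, `½((tr S)² − tr(S²)) = c`, `tr(adj S) = 0`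
and `det S = 0`. -/
theorem massive_solution_volume_preserving_and_strain_charpoly
    (m : ℝ) (hm : 0 < m)
    (p : Fin 4 → ℝ)
    (hp_time : p 0 ^ 2 + p 1 ^ 2 + p 2 ^ 2 - p 3 ^ 2 = -(4 * m ^ 2))
    (hp_fwd : 0 < p 3)
    (u : Fin 4 → ℂ)
    (hu_null : u 0 ^ 2 + u 1 ^ 2 + u 2 ^ 2 - u 3 ^ 2 = 0)
    (hu_pos : 0 < normSq (u 0) + normSq (u 1) + normSq (u 2) - normSq (u 3))
    (hpu : (p 0 : ℂ) * u 0 + (p 1 : ℂ) * u 1 + (p 2 : ℂ) * u 2 + (p 3 : ℂ) * u 3 = 0)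
    (v : Fin 4 → ℝ)
    (hpv : p 0 * v 0 + p 1 * v 1 + p 2 * v 2 + p 3 * v 3 = 0)
    (huv : u 0 * (v 0 : ℂ) + u 1 * (v 1 : ℂ) + u 2 * (v 2 : ℂ) - u 3 * (v 3 : ℂ) = 0)
    (c : ℝ)
    (hc : c = 4 * m ^ 2 *
      ((1 / 2 : ℝ) * (normSq (u 0) + normSq (u 1) + normSq (u 2) - normSq (u 3))
        + (v 0 ^ 2 + v 1 ^ 2 + v 2 ^ 2 - v 3 ^ 2)))
    (θ : ℝ)
    (η : Matrix (Fin 4) (Fin 4) ℝ)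
    (hη : η = Matrix.diagonal ![1, 1, 1, -1])
    (D : Matrix (Fin 4) (Fin 4) ℝ)
    (hD : ∀ α β : Fin 4, D α β =
      (if α = β then 1 else 0)
        + (Complex.I * u α * (p β : ℂ) * Complex.exp (θ * Complex.I)).re
        + v α * p β)
    (S : Matrix (Fin 4) (Fin 4) ℝ)
    (hS : S = η * Dᵀ * η * D - 1) :
    D.det = 1 ∧
    S.charpoly = X ^ 4 + C c * X ^ 3 + C c * X ^ 2 ∧
    S.trace = -c ∧
    (1 / 2 : ℝ) * (S.trace ^ 2 - (S * S).trace) = c ∧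
    S.adjugate.trace = 0 ∧
    S.det = 0 := by
  obtain rfl : η = minkowskiMetric ℝ := hη
  have hc_invariant : c = -((p ⬝ᵥ minkowskiMetric ℝ *ᵥ p) *
      (1 / 2 * (star u ⬝ᵥ (minkowskiMetric ℝ).map ofReal *ᵥ u).re
        + v ⬝ᵥ minkowskiMetric ℝ *ᵥ v)) := by
    rw [hc, map_ofReal_minkowskiMetric, re_star_dotProduct_minkowskiMetric_mulVec]
    simp only [dotProduct_minkowskiMetric_mulVec, ← pow_two, hp_time, neg_mul, neg_neg]
  obtain ⟨det_D, charpoly_S, trace_S, minors_S, adjugate_S, det_S⟩ :=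
    massive_solution_volume_preserving_and_strain_charpoly_general (by simp)
      (isSymm_minkowskiMetric ℝ) (minkowskiMetric_mul_self ℝ)
      (by simpa only [map_ofReal_minkowskiMetric, dotProduct_minkowskiMetric_mulVec, ← pow_two])
      (by simpa [dotProduct, Fin.sum_univ_four] using hpu)
      (by simpa [dotProduct, Fin.sum_univ_four] using hpv)
      (by rwa [map_ofReal_minkowskiMetric, dotProduct_minkowskiMetric_mulVec])
      hc_invariant hD hS
  exact ⟨det_D, by simpa using charpoly_S, trace_S, minors_S, by rw [adjugate_S, trace_zero], det_S⟩
end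

section
/- Let m > 0 and for q ∈ ℝ⁴ let N_m(q) be the 5×5 real matrix [[cos(2mq⁴), −sin(2mq⁴), 0, 0, q¹], [sin(2mq⁴), cos(2mq⁴), 0, 0, q²], [0, 0, 1, 0, q³], [0, 0, 0, 1, q⁴], [0, 0, 0, 0, 1]]. Then the set SG_m = { N_m(q) : q ∈ ℝ⁴ } is a subgroup of GL(5,ℝ) (it contains the identity and is closed under matrix multiplication and inversion), and its affine action on ℝ⁴, sending x to the first four components of N_m(q)·(x¹,x²,x³,x⁴,1)ᵀ, is simply transitive: for all x, y ∈ ℝ⁴ there exists a unique q ∈ ℝ⁴ whose action sends x to y. -/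
/-!
The matrix `N_m(q)` represents the affine map `x ↦ R(2mq⁴) x + q`, where `R θ` is the rotation by
`θ` in the first coordinate plane. Since `R` is a one-parameter group that fixes the fourth
coordinate, the angle `2mq⁴` is additive under composition, so that `N_m(q) N_m(r)` is `N_m` of the
image of `r` under `q`. The equation `R(2mq⁴) x + q = y` forces `q⁴ = y⁴ - x⁴`, which fixes the
rotation and hence `q`; solving it for `y = 0` yields the inverses.
-/

open Matrix

/-- The 5×5 matrix `N_m(q)` realising an element of the massive screw group. -/
noncomputable def massiveScrew (m : ℝ) (q : Fin 4 → ℝ) : Matrix (Fin 5) (Fin 5) ℝ :=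
  !![Real.cos (2 * m * q 3), -Real.sin (2 * m * q 3), 0, 0, q 0;
     Real.sin (2 * m * q 3), Real.cos (2 * m * q 3), 0, 0, q 1;
     0, 0, 1, 0, q 2;
     0, 0, 0, 1, q 3;
     0, 0, 0, 0, 1]

/-- The affine action of `N_m(q)` on `ℝ⁴`: the first four components of
`N_m(q)·(x¹,x²,x³,x⁴,1)ᵀ`. -/
noncomputable def massiveScrewAction (m : ℝ) (q : Fin 4 → ℝ) (x : Fin 4 → ℝ) : Fin 4 → ℝ :=
  fun i => (massiveScrew m q).mulVec ![x 0, x 1, x 2, x 3, 1] i.castSucc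

section AffineMatrix

variable {R : Type*} [Semiring R] {n : ℕ}

/-- The matrix in homogeneous coordinates of the affine map `x ↦ A x + b`, the homogenising
coordinate being the last one. -/
def affineMatrix (A : Matrix (Fin n) (Fin n) R) (b : Fin n → R) :
    Matrix (Fin (n + 1)) (Fin (n + 1)) R :=
  reindex finSumFinEquiv finSumFinEquiv (fromBlocks A (replicateCol (Fin 1) b) 0 1)

theorem affineMatrix_one_zero : affineMatrix (1 : Matrix (Fin n) (Fin n) R) 0 = 1 := by
  simp [affineMatrix]

theorem affineMatrix_mul_affineMatrix (A B : Matrix (Fin n) (Fin n) R) (b c : Fin n → R) :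
    affineMatrix A b * affineMatrix B c = affineMatrix (A * B) (A *ᵥ c + b) := by
  simp [affineMatrix, fromBlocks_multiply, replicateCol_mulVec, replicateCol_add]

theorem affineMatrix_mulVec_snoc_one (A : Matrix (Fin n) (Fin n) R) (b x : Fin n → R) :
    affineMatrix A b *ᵥ (Fin.snoc x 1 : Fin (n + 1) → R) =
      (Fin.snoc (A *ᵥ x + b) 1 : Fin (n + 1) → R) := by
  ext i
  cases i using Fin.lastCases <;>
    simp [affineMatrix, mulVec, dotProduct, Fin.sum_univ_castSucc]

end AffineMatrix

/-- The rotation by the angle `θ` in the plane of the first two coordinates of `ℝ⁴`, which is the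
linear part of a massive screw. -/
noncomputable def screwRotation (θ : ℝ) : Matrix (Fin 4) (Fin 4) ℝ :=
  !![Real.cos θ, -Real.sin θ, 0, 0;
     Real.sin θ, Real.cos θ, 0, 0;
     0, 0, 1, 0;
     0, 0, 0, 1]

theorem screwRotation_zero : screwRotation 0 = 1 := by
  ext i j
  fin_cases i <;> fin_cases j <;> simp [screwRotation]

theorem screwRotation_add (θ φ : ℝ) :
    screwRotation (θ + φ) = screwRotation θ * screwRotation φ := by
  ext i j
  fin_cases i <;> fin_cases j <;>
    simp [screwRotation, mul_apply, Fin.sum_univ_four, Real.cos_add, Real.sin_add] <;> ring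

theorem screwRotation_mulVec_three (θ : ℝ) (x : Fin 4 → ℝ) : (screwRotation θ *ᵥ x) 3 = x 3 := by
  simp [screwRotation, mulVec, dotProduct, Fin.sum_univ_four]

section MassiveScrew

variable (m : ℝ) (q r x y : Fin 4 → ℝ)

theorem massiveScrew_eq_affineMatrix :
    massiveScrew m q = affineMatrix (screwRotation (2 * m * q 3)) q := by
  ext i j
  fin_cases i <;> fin_cases j <;> rfl

theorem massiveScrew_zero : massiveScrew m 0 = 1 := by
  simp [massiveScrew_eq_affineMatrix, screwRotation_zero, affineMatrix_one_zero]

theorem massiveScrewAction_eq_screwRotation_mulVec_add :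
    massiveScrewAction m q x = screwRotation (2 * m * q 3) *ᵥ x + q := by
  have snoc_eq : ![x 0, x 1, x 2, x 3, 1] = (Fin.snoc x 1 : Fin 5 → ℝ) := by
    ext i
    fin_cases i <;> rfl
  ext i
  rw [massiveScrewAction, snoc_eq, massiveScrew_eq_affineMatrix, affineMatrix_mulVec_snoc_one,
    Fin.snoc_castSucc]

theorem massiveScrewAction_apply_three : massiveScrewAction m q x 3 = x 3 + q 3 := by
  rw [massiveScrewAction_eq_screwRotation_mulVec_add, Pi.add_apply, screwRotation_mulVec_three]

theorem massiveScrew_mul_massiveScrew :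
    massiveScrew m q * massiveScrew m r = massiveScrew m (massiveScrewAction m q r) := by
  have angle_add : 2 * m * massiveScrewAction m q r 3 = 2 * m * q 3 + 2 * m * r 3 := by
    rw [massiveScrewAction_apply_three]
    ring
  rw [massiveScrew_eq_affineMatrix m (massiveScrewAction m q r), angle_add, screwRotation_add,
    massiveScrewAction_eq_screwRotation_mulVec_add, ← affineMatrix_mul_affineMatrix,
    ← massiveScrew_eq_affineMatrix, ← massiveScrew_eq_affineMatrix]

theorem massiveScrewAction_eq_iff :
    massiveScrewAction m q x = y ↔ q = y - screwRotation (2 * m * (y 3 - x 3)) *ᵥ x := by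
  constructor
  · rintro rfl
    rw [massiveScrewAction_apply_three, add_sub_cancel_left,
      massiveScrewAction_eq_screwRotation_mulVec_add, add_sub_cancel_left]
  · intro hq
    have hq₃ : q 3 = y 3 - x 3 := by
      rw [hq, Pi.sub_apply, screwRotation_mulVec_three]
    rw [massiveScrewAction_eq_screwRotation_mulVec_add, hq₃, hq, add_sub_cancel]

theorem existsUnique_massiveScrewAction_eq : ∃! q, massiveScrewAction m q x = y := by
  simp only [massiveScrewAction_eq_iff, existsUnique_eq]

end MassiveScrew

/-- For `m > 0`, the set `SG_m = {N_m(q) : q ∈ ℝ⁴}` contains the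
identity and is closed under matrix multiplication and inversion (hence is a subgroup
of `GL(5,ℝ)`), and its affine action on `ℝ⁴` is simply transitive. -/
theorem massiveScrew_group_and_simply_transitive
    (m : ℝ) (hm : 0 < m) :
    (∃ q : Fin 4 → ℝ, massiveScrew m q = 1) ∧
    (∀ q q' : Fin 4 → ℝ, ∃ q'' : Fin 4 → ℝ,
      massiveScrew m q * massiveScrew m q' = massiveScrew m q'') ∧
    (∀ q : Fin 4 → ℝ, ∃ q' : Fin 4 → ℝ,
      massiveScrew m q * massiveScrew m q' = 1 ∧
      massiveScrew m q' * massiveScrew m q = 1) ∧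
    (∀ x y : Fin 4 → ℝ, ∃! q : Fin 4 → ℝ, massiveScrewAction m q x = y) := by
  refine ⟨⟨0, massiveScrew_zero m⟩, fun q r => ⟨_, massiveScrew_mul_massiveScrew m q r⟩,
    fun q => ?_, existsUnique_massiveScrewAction_eq m⟩
  obtain ⟨q', hq', -⟩ := existsUnique_massiveScrewAction_eq m q 0
  have left_inv : massiveScrew m q' * massiveScrew m q = 1 := by
    rw [massiveScrew_mul_massiveScrew, hq', massiveScrew_zero]
  exact ⟨q', mul_eq_one_comm.1 left_inv, left_inv⟩
end
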